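/- Let Ω be a lattice in ℂ with Weierstrass sigma function σ. For integers n, m with m > 0, the meromorphic function f_{n,m}(z) = σ(nz/m)^{m²} / σ(z)^{n²} is constant if and only if n = 0, n = m or n = −m; moreover f_{0,m} = 0, f_{m,m} = 1 and f_{−m,m} = (−1)^m, and for all n one has f_{−n,m}(z) = (−1)^m f_{n,m}(z). -/

import Mathlib

/-!
Writing `σ(z) = z ∏ (1 + g_w(z))`, the canonical factors satisfy `g_w(z) = O(|z/w|³)`, and
`∑ |w|⁻³` converges over a lattice of rank two. Hence the product converges locally uniformly, so
`σ` is continuous (`continuous_wSigma`), and it vanishes exactly on the lattice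
(`wSigma_eq_zero_iff`). The symmetry `w ↦ -w` of the lattice makes `σ` odd (`wSigma_neg`), which
gives all the explicit values of `f_{n,m}`.

If `f_{n,m} = c` off the lattice and `n ≠ 0`, then `σ(nz/m)^{m²} = c σ(z)^{n²}` for every `z`, since
both sides are continuous and the complement of the (countable) lattice is dense. Evaluating at
`z = mω₁/(2n)` shows `c ≠ 0`, so comparing zeros gives `nz/m ∈ Ω ↔ z ∈ Ω`. Taking `z = ω₁` and
`z = mω₁/n` shows that both `n/m` and `m/n` are integers, whence `n = ±m`.
-/

open Complex

noncomputable section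

/-- The lattice `ℤω₁ + ℤω₂`, as a set of complex numbers. -/
def LatticePts (ω₁ ω₂ : ℂ) : Set ℂ := {z | ∃ m n : ℤ, z = m * ω₁ + n * ω₂}

/-- `ω₁, ω₂` are the basis of a lattice: they are `ℝ`-linearly independent. -/
def IsLatticeBasis (ω₁ ω₂ : ℂ) : Prop := LinearIndependent ℝ ![ω₁, ω₂]

/-- The nonzero lattice points. -/
def LatticePts' (ω₁ ω₂ : ℂ) : Set ℂ := {w | w ∈ LatticePts ω₁ ω₂ ∧ w ≠ 0}

/-- The Weierstrass sigma function of the lattice `ℤω₁ + ℤω₂`: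
`σ(z) = z ∏_{ω ∈ Ω∖{0}} (1 − z/ω) exp(z/ω + z²/(2ω²))`. -/
def wSigma (ω₁ ω₂ : ℂ) (z : ℂ) : ℂ :=
  z * ∏' w : LatticePts' ω₁ ω₂,
    (1 - z / (w : ℂ)) * Complex.exp (z / w + z ^ 2 / (2 * (w : ℂ) ^ 2))

/-- The Weierstrass zeta function `ζ = σ'/σ`. -/
def wZeta (ω₁ ω₂ : ℂ) (z : ℂ) : ℂ := deriv (wSigma ω₁ ω₂) z / wSigma ω₁ ω₂ z

/-- The Weierstrass elliptic function `℘ = -ζ'`. -/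
def wP (ω₁ ω₂ : ℂ) (z : ℂ) : ℂ := - deriv (wZeta ω₁ ω₂) z

/-- The invariant `g₂ = 60 Σ_{ω ∈ Ω∖{0}} ω⁻⁴` of the lattice. -/
def g2 (ω₁ ω₂ : ℂ) : ℂ := 60 * ∑' w : LatticePts' ω₁ ω₂, ((w : ℂ) ^ 4)⁻¹

/-- The invariant `g₃ = 140 Σ_{ω ∈ Ω∖{0}} ω⁻⁶` of the lattice. -/
def g3 (ω₁ ω₂ : ℂ) : ℂ := 140 * ∑' w : LatticePts' ω₁ ω₂, ((w : ℂ) ^ 6)⁻¹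

/-- The quasi-period `η(ω) = ζ(z + ω) − ζ(z)` (independent of `z`; we evaluate at the
point `(ω₁+ω₂)/3`, which is never a pole of `ζ`, nor is its translate by a lattice point). -/
def wEta (ω₁ ω₂ : ℂ) (ω : ℂ) : ℂ :=
  wZeta ω₁ ω₂ ((ω₁ + ω₂) / 3 + ω) - wZeta ω₁ ω₂ ((ω₁ + ω₂) / 3)

/-- The field of endomorphisms `k = {α ∈ ℂ : αΩ ⊆ Ω} ⊗_ℤ ℚ`, as a set of complex numbers:
the `α ∈ ℂ` such that `mα` stabilizes the lattice for some nonzero integer `m`. -/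
def endQ (ω₁ ω₂ : ℂ) : Set ℂ :=
  {α | ∃ m : ℤ, m ≠ 0 ∧ ∀ w ∈ LatticePts ω₁ ω₂, (m : ℂ) * α * w ∈ LatticePts ω₁ ω₂}

/-- The transcendence degree over `ℚ` of the subfield `ℚ(S)` of `ℂ` generated by `S` is
at least `d`: there are `d` algebraically independent elements in `ℚ(S)`. -/
def trdegGe (S : Set ℂ) (d : ℕ) : Prop :=
  ∃ x : Fin d → ℂ, (∀ i, x i ∈ IntermediateField.adjoin ℚ S) ∧ AlgebraicIndependent ℚ x

/-- The function `f_{n,m}(z) = σ(nz/m)^{m²} / σ(z)^{n²}`. -/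
def wf (ω₁ ω₂ : ℂ) (n m : ℤ) (z : ℂ) : ℂ :=
  wSigma ω₁ ω₂ ((n : ℂ) * z / (m : ℂ)) ^ (m ^ 2 : ℤ) / wSigma ω₁ ω₂ z ^ (n ^ 2 : ℤ)

/-- The lattice as a bundled `PeriodPair`, giving access to summability over lattice points. -/
def toPeriodPair (ω₁ ω₂ : ℂ) (h : IsLatticeBasis ω₁ ω₂) : PeriodPair := ⟨ω₁, ω₂, h⟩

lemma mem_latticePts_iff {ω₁ ω₂ : ℂ} (h : IsLatticeBasis ω₁ ω₂) (z : ℂ) :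
    z ∈ LatticePts ω₁ ω₂ ↔ z ∈ (toPeriodPair ω₁ ω₂ h).lattice := by
  rw [PeriodPair.mem_lattice]
  simp only [LatticePts, Set.mem_ofPred_eq, toPeriodPair, eq_comm]

lemma real_mul_mem_latticePts_iff {ω₁ ω₂ : ℂ} (h : IsLatticeBasis ω₁ ω₂) (t : ℝ) :
    (t : ℂ) * ω₁ ∈ LatticePts ω₁ ω₂ ↔ ∃ k : ℤ, t = k := by
  constructor
  · rintro ⟨a, b, hab⟩
    have := LinearIndependent.pair_iff.mp h (t - a) (-b)
      (by simp; linear_combination hab)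
    exact ⟨a, by linarith [this.1]⟩
  · rintro ⟨k, rfl⟩
    exact ⟨k, 0, by simp⟩

lemma neg_mem_latticePts {ω₁ ω₂ z : ℂ} (h : z ∈ LatticePts ω₁ ω₂) :
    -z ∈ LatticePts ω₁ ω₂ := by
  obtain ⟨a, b, rfl⟩ := h
  exact ⟨-a, -b, by push_cast; ring⟩

lemma countable_latticePts (ω₁ ω₂ : ℂ) : (LatticePts ω₁ ω₂).Countable := by
  have : LatticePts ω₁ ω₂ = Set.range fun p : ℤ × ℤ => (p.1 : ℂ) * ω₁ + p.2 * ω₂ := by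
    ext z
    simp [LatticePts, eq_comm]
  rw [this]
  exact Set.countable_range _

lemma summable_latticePts' {ω₁ ω₂ : ℂ} (h : IsLatticeBasis ω₁ ω₂) :
    Summable fun w : LatticePts' ω₁ ω₂ => ‖(w : ℂ)‖⁻¹ ^ 3 := by
  have hs := ZLattice.summable_norm_pow_inv (toPeriodPair ω₁ ω₂ h).lattice 3 (by simp)
  exact hs.comp_injective
    (i := fun w : LatticePts' ω₁ ω₂ =>
      (⟨w, (mem_latticePts_iff h _).1 w.2.1⟩ : (toPeriodPair ω₁ ω₂ h).lattice))
    (fun a b hab => Subtype.ext (by simpa using hab))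

/-- The cubic bound for the genus-two canonical factor: the quadratic Taylor polynomial of
`exp (u + u²/2)` agrees with `(1 - u)⁻¹` up to order three. -/
lemma norm_canonicalFactor_sub_one_le {u : ℂ} (hu : ‖u‖ ≤ 1 / 2) :
    ‖(1 - u) * exp (u + u ^ 2 / 2) - 1‖ ≤ 2 * ‖u‖ ^ 3 := by
  set v := u + u ^ 2 / 2 with hv
  have h0 := norm_nonneg u
  have hv5 : ‖v‖ ≤ 5 / 4 * ‖u‖ := by
    calc ‖v‖ ≤ ‖u‖ + ‖u ^ 2 / 2‖ := norm_add_le _ _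
      _ = ‖u‖ + ‖u‖ ^ 2 / 2 := by simp
      _ ≤ _ := by nlinarith
  have hb := exp_bound (x := v) (by linarith) (n := 3) (by norm_num)
  norm_num [Finset.sum_range_succ, Nat.factorial] at hb
  have hvc : ‖v‖ ^ 3 ≤ (5 / 4 * ‖u‖) ^ 3 := by gcongr
  have h1u : ‖1 - u‖ ≤ 3 / 2 := by
    calc ‖1 - u‖ ≤ ‖(1 : ℂ)‖ + ‖u‖ := norm_sub_le _ _
      _ ≤ 3 / 2 := by simp; linarith
  have hdec : (1 - u) * exp v - 1 =
      (1 - u) * (exp v - (1 + v + v ^ 2 / 2)) + u ^ 3 * (-(1 / 2) - u / 2 + (1 - u) * u / 8) := by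
    rw [hv]; ring
  have hp : ‖-(1 / 2) - u / 2 + (1 - u) * u / 8‖ ≤ 1 := by
    calc ‖-(1 / 2) - u / 2 + (1 - u) * u / 8‖
        ≤ ‖(-(1 / 2) : ℂ)‖ + ‖u / 2‖ + ‖(1 - u) * u / 8‖ :=
          (norm_add_le _ _).trans (by gcongr; exact norm_sub_le _ _)
      _ = 1 / 2 + ‖u‖ / 2 + ‖1 - u‖ * ‖u‖ / 8 := by simp
      _ ≤ 1 := by nlinarith [norm_nonneg (1 - u)]
  rw [hdec]
  calc _ ≤ ‖(1 - u) * (exp v - (1 + v + v ^ 2 / 2))‖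
        + ‖u ^ 3 * (-(1 / 2) - u / 2 + (1 - u) * u / 8)‖ := norm_add_le _ _
    _ = ‖1 - u‖ * ‖exp v - (1 + v + v ^ 2 / 2)‖
        + ‖u‖ ^ 3 * ‖-(1 / 2) - u / 2 + (1 - u) * u / 8‖ := by simp
    _ ≤ 3 / 2 * ((5 / 4 * ‖u‖) ^ 3 * (2 / 9)) + ‖u‖ ^ 3 * 1 := by
        gcongr
        exact hb.trans (by gcongr)
    _ ≤ 2 * ‖u‖ ^ 3 := by nlinarith [pow_nonneg h0 3]

/-- The deviation from `1` of the factor of `σ` indexed by `w`. -/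
def sigmaTerm (w z : ℂ) : ℂ := (1 - z / w) * exp (z / w + z ^ 2 / (2 * w ^ 2)) - 1

lemma wSigma_eq (ω₁ ω₂ z : ℂ) :
    wSigma ω₁ ω₂ z = z * ∏' w : LatticePts' ω₁ ω₂, (1 + sigmaTerm w z) := by
  simp [wSigma, sigmaTerm]

/-- Only finitely many `w` satisfy `‖w‖ < 2R`; for the others the cubic bound applies on the
whole ball of radius `R`. -/
lemma eventually_norm_sigmaTerm_le {ω₁ ω₂ : ℂ} (h : IsLatticeBasis ω₁ ω₂) {R : ℝ} (hR : 0 < R) :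
    ∀ᶠ w : LatticePts' ω₁ ω₂ in Filter.cofinite, ∀ z ∈ Metric.ball (0 : ℂ) R,
      ‖sigmaTerm w z‖ ≤ 2 * R ^ 3 * ‖(w : ℂ)‖⁻¹ ^ 3 := by
  have ht := (summable_latticePts' h).tendsto_cofinite_zero
  have hpos : 0 < (1 / (2 * R)) ^ 3 := by positivity
  filter_upwards [ht.eventually (gt_mem_nhds hpos)] with w hw z hz
  have hw' : ‖(w : ℂ)‖⁻¹ < 1 / (2 * R) := lt_of_pow_lt_pow_left₀ 3 (by positivity) hw
  have hz' : ‖z‖ ≤ R := by simpa using (Metric.mem_ball.1 hz).le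
  have hn : ‖z / w‖ ≤ R * ‖(w : ℂ)‖⁻¹ := by
    rw [norm_div, div_eq_mul_inv]; gcongr
  have hle : ‖z / (w : ℂ)‖ ≤ 1 / 2 := by
    refine hn.trans ((mul_le_mul_of_nonneg_left hw'.le hR.le).trans_eq ?_)
    field_simp
  have hterm : sigmaTerm w z = (1 - z / w) * exp (z / w + (z / w) ^ 2 / 2) - 1 := by
    rw [sigmaTerm, show z ^ 2 / (2 * (w : ℂ) ^ 2) = (z / w) ^ 2 / 2 by ring]
  rw [hterm]
  calc _ ≤ 2 * ‖z / (w : ℂ)‖ ^ 3 := norm_canonicalFactor_sub_one_le hle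
    _ ≤ 2 * (R * ‖(w : ℂ)‖⁻¹) ^ 3 := by gcongr
    _ = _ := by ring

lemma continuous_sigmaTerm (w : ℂ) : Continuous (sigmaTerm w) := by
  unfold sigmaTerm
  fun_prop

lemma continuous_wSigma {ω₁ ω₂ : ℂ} (h : IsLatticeBasis ω₁ ω₂) : Continuous (wSigma ω₁ ω₂) := by
  have hfun : wSigma ω₁ ω₂ = fun z => z * ∏' w : LatticePts' ω₁ ω₂, (1 + sigmaTerm w z) :=
    funext (wSigma_eq ω₁ ω₂)
  rw [hfun]
  refine continuous_id.mul (continuous_iff_continuousAt.2 fun z₀ => ?_)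
  have hR : 0 < ‖z₀‖ + 1 := by positivity
  have hp := Summable.hasProdLocallyUniformlyOn_one_add
    (f := fun (w : LatticePts' ω₁ ω₂) z => sigmaTerm w z) Metric.isOpen_ball
    ((summable_latticePts' h).mul_left (2 * (‖z₀‖ + 1) ^ 3))
    (eventually_norm_sigmaTerm_le h hR) fun w => (continuous_sigmaTerm w).continuousOn
  have hc : ContinuousOn (fun z => ∏' w : LatticePts' ω₁ ω₂, (1 + sigmaTerm w z))
      (Metric.ball 0 (‖z₀‖ + 1)) := by
    refine TendstoLocallyUniformlyOn.continuousOn hp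
      (Filter.Eventually.frequently (Filter.Eventually.of_forall fun s => ?_))
    exact (continuous_finsetProd s fun w _ =>
      continuous_const.add (continuous_sigmaTerm w)).continuousOn
  exact hc.continuousAt (Metric.isOpen_ball.mem_nhds (by simp))

lemma wSigma_eq_zero_iff {ω₁ ω₂ : ℂ} (h : IsLatticeBasis ω₁ ω₂) (z : ℂ) :
    wSigma ω₁ ω₂ z = 0 ↔ z ∈ LatticePts ω₁ ω₂ := by
  rw [wSigma_eq]
  constructor
  · intro h0
    by_contra hz
    have hz0 : z ≠ 0 := fun hz' => hz ⟨0, 0, by simp [hz']⟩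
    refine mul_ne_zero hz0 (tprod_one_add_ne_zero_of_summable (fun w hw => ?_) ?_) h0
    · have hw0 : (w : ℂ) ≠ 0 := w.2.2
      simp only [sigmaTerm, add_sub_cancel, mul_eq_zero, exp_ne_zero, or_false, sub_eq_zero] at hw
      have : z = w := by field_simp at hw; exact hw.symm
      exact hz (this ▸ w.2.1)
    · refine ((summable_latticePts' h).mul_left (2 * (‖z‖ + 1) ^ 3)).of_norm_bounded_eventually ?_
      filter_upwards [eventually_norm_sigmaTerm_le h (R := ‖z‖ + 1) (by positivity)] with w hw
      simpa using hw z (by simp)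
  · intro hz
    by_cases hz0 : z = 0
    · simp [hz0]
    · rw [tprod_of_exists_eq_zero ⟨⟨z, hz, hz0⟩, by simp [sigmaTerm, hz0]⟩, mul_zero]

lemma wSigma_neg (ω₁ ω₂ z : ℂ) : wSigma ω₁ ω₂ (-z) = -wSigma ω₁ ω₂ z := by
  let e : LatticePts' ω₁ ω₂ ≃ LatticePts' ω₁ ω₂ :=
    { toFun := fun w => ⟨-w, neg_mem_latticePts w.2.1, neg_ne_zero.2 w.2.2⟩
      invFun := fun w => ⟨-w, neg_mem_latticePts w.2.1, neg_ne_zero.2 w.2.2⟩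
      left_inv := fun w => by simp
      right_inv := fun w => by simp }
  rw [wSigma_eq, wSigma_eq, ← e.tprod_eq]
  simp [e, sigmaTerm]

lemma neg_one_zpow_sq (m : ℤ) : (-1 : ℂ) ^ (m ^ 2 : ℤ) = (-1) ^ m := by
  rcases Int.even_or_odd m with hm | hm
  · rw [hm.neg_one_zpow, (hm.pow_of_ne_zero two_ne_zero).neg_one_zpow]
  · rw [hm.neg_one_zpow, hm.pow.neg_one_zpow]

lemma wf_neg (ω₁ ω₂ : ℂ) (n m : ℤ) (z : ℂ) :
    wf ω₁ ω₂ (-n) m z = (-1 : ℂ) ^ m * wf ω₁ ω₂ n m z := by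
  have h1 : ((-n : ℤ) : ℂ) * z / m = -((n : ℂ) * z / m) := by push_cast; ring
  rw [wf, wf, h1, wSigma_neg, neg_sq, neg_eq_neg_one_mul, mul_zpow, neg_one_zpow_sq, mul_div_assoc]

lemma wf_zero {ω₁ ω₂ : ℂ} {m : ℤ} (hm : m ≠ 0) (z : ℂ) : wf ω₁ ω₂ 0 m z = 0 := by
  have h0 : wSigma ω₁ ω₂ 0 = 0 := by simp [wSigma]
  simp [wf, h0, zero_zpow _ (pow_ne_zero 2 hm)]

lemma wf_self {ω₁ ω₂ : ℂ} (h : IsLatticeBasis ω₁ ω₂) {m : ℤ} (hm : m ≠ 0) {z : ℂ}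
    (hz : z ∉ LatticePts ω₁ ω₂) : wf ω₁ ω₂ m m z = 1 := by
  have hm' : (m : ℂ) ≠ 0 := by exact_mod_cast hm
  rw [wf, mul_div_cancel_left₀ _ hm']
  exact div_self (zpow_ne_zero _ (mt (wSigma_eq_zero_iff h z).1 hz))

/-- Constancy off the lattice propagates, by density and continuity, to an identity on all
of `ℂ`. -/
lemma wSigma_zpow_eq_of_wf_const {ω₁ ω₂ : ℂ} (h : IsLatticeBasis ω₁ ω₂) {n m : ℤ} {c : ℂ}
    (hc : ∀ z : ℂ, z ∉ LatticePts ω₁ ω₂ → wf ω₁ ω₂ n m z = c) (z : ℂ) :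
    wSigma ω₁ ω₂ ((n : ℂ) * z / m) ^ (m ^ 2 : ℤ) = c * wSigma ω₁ ω₂ z ^ (n ^ 2 : ℤ) := by
  have hσ := continuous_wSigma h
  refine congrFun (Continuous.ext_on
    (f := fun z => wSigma ω₁ ω₂ ((n : ℂ) * z / m) ^ (m ^ 2 : ℤ))
    (g := fun z => c * wSigma ω₁ ω₂ z ^ (n ^ 2 : ℤ))
    ((countable_latticePts ω₁ ω₂).dense_compl ℝ) ?_ ?_ fun z hz => ?_) z
  · exact (hσ.comp (by fun_prop)).zpow₀ _ fun _ => Or.inr (sq_nonneg m)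
  · exact continuous_const.mul (hσ.zpow₀ _ fun _ => Or.inr (sq_nonneg n))
  · have hne := zpow_ne_zero (n ^ 2) (mt (wSigma_eq_zero_iff h z).1 hz)
    exact (div_eq_iff hne).1 (hc z hz)

lemma eq_or_eq_neg_of_wf_const {ω₁ ω₂ : ℂ} (h : IsLatticeBasis ω₁ ω₂) {n m : ℤ} (hn : n ≠ 0)
    (hm : m ≠ 0) {c : ℂ} (hc : ∀ z : ℂ, z ∉ LatticePts ω₁ ω₂ → wf ω₁ ω₂ n m z = c) :
    n = m ∨ n = -m := by
  have key := wSigma_zpow_eq_of_wf_const h hc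
  have hn' : (n : ℂ) ≠ 0 := by exact_mod_cast hn
  have hm' : (m : ℂ) ≠ 0 := by exact_mod_cast hm
  have hnR : (n : ℝ) ≠ 0 := by exact_mod_cast hn
  have hmR : (m : ℝ) ≠ 0 := by exact_mod_cast hm
  have hc0 : c ≠ 0 := by
    -- at this point the left-hand side is `σ(ω₁/2)^{m²}`, which is nonzero
    intro hc0
    have h1 := key ((m : ℂ) * ω₁ / (2 * n))
    rw [hc0, zero_mul, show (n : ℂ) * (m * ω₁ / (2 * n)) / m = ((1 / 2 : ℝ) : ℂ) * ω₁ by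
      push_cast; field_simp] at h1
    obtain ⟨k, hk⟩ := (real_mul_mem_latticePts_iff h _).1
      ((wSigma_eq_zero_iff h _).1 (eq_zero_of_zpow_eq_zero h1))
    have : (1 : ℝ) = ((2 * k : ℤ) : ℝ) := by push_cast; linarith
    have : (1 : ℤ) = 2 * k := by exact_mod_cast this
    omega
  have hiff (z : ℂ) : (n : ℂ) * z / m ∈ LatticePts ω₁ ω₂ ↔ z ∈ LatticePts ω₁ ω₂ := by
    rw [← wSigma_eq_zero_iff h, ← wSigma_eq_zero_iff h, ← zpow_eq_zero_iff (pow_ne_zero 2 hm),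
      key z, mul_eq_zero, or_iff_right hc0, zpow_eq_zero_iff (pow_ne_zero 2 hn)]
  have hω : ω₁ ∈ LatticePts ω₁ ω₂ := ⟨1, 0, by simp⟩
  have hdvd : m ∣ n := by
    have h1 := (hiff ω₁).2 hω
    rw [show (n : ℂ) * ω₁ / m = ((n / m : ℝ) : ℂ) * ω₁ by push_cast; ring,
      real_mul_mem_latticePts_iff h] at h1
    obtain ⟨k, hk⟩ := h1
    rw [div_eq_iff hmR] at hk
    exact ⟨k, by rw [mul_comm]; exact_mod_cast hk⟩
  have hdvd' : n ∣ m := by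
    have h1 := (hiff ((m / n : ℝ) * ω₁)).1 (by
      convert! hω using 1
      push_cast; field_simp)
    rw [real_mul_mem_latticePts_iff h] at h1
    obtain ⟨k, hk⟩ := h1
    rw [div_eq_iff hnR] at hk
    exact ⟨k, by rw [mul_comm]; exact_mod_cast hk⟩
  exact Int.natAbs_eq_natAbs_iff.1 (Int.natAbs_eq_of_dvd_dvd hdvd' hdvd)

/-- For integers `n, m` with `m > 0`, the function `f_{n,m}(z) = σ(nz/m)^{m²}/σ(z)^{n²}`
(viewed on `ℂ ∖ Ω`, where it is defined) is constant if and only if `n = 0`, `n = m` or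
`n = −m`;  moreover `f_{0,m} = 0`, `f_{m,m} = 1`, `f_{−m,m} = (−1)^m`, and
`f_{−n,m}(z) = (−1)^m f_{n,m}(z)`. -/
theorem wf_constant_iff (ω₁ ω₂ : ℂ) (hΩ : IsLatticeBasis ω₁ ω₂) (n m : ℤ) (hm : 0 < m) :
    ((∃ c : ℂ, ∀ z : ℂ, z ∉ LatticePts ω₁ ω₂ → wf ω₁ ω₂ n m z = c) ↔
      (n = 0 ∨ n = m ∨ n = -m)) ∧
    (∀ z : ℂ, z ∉ LatticePts ω₁ ω₂ → wf ω₁ ω₂ 0 m z = 0) ∧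
    (∀ z : ℂ, z ∉ LatticePts ω₁ ω₂ → wf ω₁ ω₂ m m z = 1) ∧
    (∀ z : ℂ, z ∉ LatticePts ω₁ ω₂ → wf ω₁ ω₂ (-m) m z = (-1 : ℂ) ^ m) ∧
    (∀ z : ℂ, z ∉ LatticePts ω₁ ω₂ → wf ω₁ ω₂ (-n) m z = (-1 : ℂ) ^ m * wf ω₁ ω₂ n m z) := by
  have hm0 : m ≠ 0 := hm.ne'
  have hneg (z : ℂ) (hz : z ∉ LatticePts ω₁ ω₂) : wf ω₁ ω₂ (-m) m z = (-1 : ℂ) ^ m := by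
    rw [wf_neg, wf_self hΩ hm0 hz, mul_one]
  refine ⟨⟨?_, ?_⟩, fun z _ => wf_zero hm0 z, fun z hz => wf_self hΩ hm0 hz, hneg,
    fun z _ => wf_neg ω₁ ω₂ n m z⟩
  · rintro ⟨c, hc⟩
    by_cases hn : n = 0
    · exact Or.inl hn
    · exact Or.inr (eq_or_eq_neg_of_wf_const hΩ hn hm0 hc)
  · rintro (rfl | rfl | rfl)
    · exact ⟨0, fun z _ => wf_zero hm0 z⟩
    · exact ⟨1, fun z hz => wf_self hΩ hm0 hz⟩
    · exact ⟨_, hneg⟩
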